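/- Let d > 0 and b ∈ ℝ with b ≠ 0. There exists a constant C ≥ 1, depending only on d and b, such that the following holds for all t ≥ 0 and η ∈ (0,1]: if w(·,s), z(·,s) ∈ W^{1,1}_1(ℝ,ℂ) for each s ∈ [0,t] with s ↦ w(·,s), z(·,s) measurable, and for all s ∈ [0,t] both w and z satisfy ‖w(·,s)‖_{L¹}, ‖z(·,s)‖_{L¹} ≤ η (1+s)^{−1/2}; ‖|·| w(·,s)‖_{L¹}, ‖|·| z(·,s)‖_{L¹} ≤ η (1+s)^{−1}; ‖∂_k w(·,s)‖_{L¹}, ‖∂_k z(·,s)‖_{L¹} ≤ η; and ‖|·| ∂_k w(·,s)‖_{L¹}, ‖|·| ∂_k z(·,s)‖_{L¹} ≤ η ln(2+s) (1+s)^{−1/2}; then for a ∈ {0,1}: ∫_ℝ |k|^a | ∫_0^t ∫_ℝ e^{−d k² (t−s) + i b ξ s} w(k−ξ, s) · ξ z(ξ, s) dξ ds | dk ≤ C η² (1+t)^{−(1+a)/2}. -/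

import Mathlib

/-!
Write `J s k` for the `ξ`-integral with the heat factor `exp (-d k² (t - s))` taken out. A function
in `W^{1,1}` is almost everywhere the primitive of its weak derivative, so it can be integrated by
parts against any locally integrable function. Doing so for `w (k - ξ)` and then for `ξ z ξ` leaves
only integrals of the phase `exp (i b s ξ)` over intervals, which are at most `2 / (|b| s)`. Since
the factor `log (2 + s)` costs less than `(1 + s)^(1/4)`, this gives the time-integrable bound
`sup |J s| ≲ η² (1 + s)^(-5/4)`, while Young's inequality gives `‖J s‖₁ ≤ η² (1 + s)^(-3/2)`.

For `s` far from `t` the supremum of `J s` is paired with the `L¹` norm of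
`|k|^a exp (-d k² (t - s))`, which has the desired decay `(1 + t)^(-(1 + a)/2)`. For `s` near `t`
the `L¹` norm of `J s` is paired with the supremum of this multiplier, of order `(t - s)^(-a/2)`:
its time integral loses `(1 + t)^(1 - a/2)` against the factor `(1 + s)^(-3/2)`.
-/

open MeasureTheory Real

noncomputable section

/-- `v'` is the weak derivative of `v : ℝ → ℂ`. -/
def HasWeakDeriv (v v' : ℝ → ℂ) : Prop :=
  LocallyIntegrable v volume ∧ LocallyIntegrable v' volume ∧
    ∀ φ : ℝ → ℝ, ContDiff ℝ (⊤ : ℕ∞) φ → HasCompactSupport φ →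
      ∫ k, Complex.ofReal (deriv φ k) * v k = -∫ k, Complex.ofReal (φ k) * v' k

/-- `e^{x + iy}` for real `x, y`. -/
def expc (x y : ℝ) : ℂ := Complex.exp (Complex.ofReal x + Complex.ofReal y * Complex.I)

section Primitive

open Set Filter Topology

lemma integral_mul_setIntegral_Iic {𝕜 : Type*} [RCLike 𝕜] {μ ν : Measure ℝ} [SFinite μ]
    [SFinite ν] {f g : ℝ → 𝕜} (hf : Integrable f μ) (hg : Integrable g ν) :
    ∫ x, f x * ∫ y in Iic x, g y ∂ν ∂μ = ∫ y, (∫ x in Ici y, f x ∂μ) * g y ∂ν := by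
  set F : ℝ × ℝ → 𝕜 := {p | p.2 ≤ p.1}.indicator fun p => f p.1 * g p.2
  have hFint : Integrable F (μ.prod ν) :=
    (hf.mul_prod hg).indicator (measurableSet_le measurable_snd measurable_fst)
  have hleft (x : ℝ) : f x * ∫ y in Iic x, g y ∂ν = ∫ y, F (x, y) ∂ν := by
    rw [← integral_const_mul, ← integral_indicator measurableSet_Iic]
    rfl
  have hright (y : ℝ) : (∫ x in Ici y, f x ∂μ) * g y = ∫ x, F (x, y) ∂μ := by
    rw [← integral_mul_const, ← integral_indicator measurableSet_Ici]
    rfl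
  simp only [hleft, hright]
  exact integral_integral_swap hFint

lemma setIntegral_Iic_eq_add_intervalIntegral {E : Type*} [NormedAddCommGroup E]
    [NormedSpace ℝ E] {μ : Measure ℝ} {f : ℝ → E} (hf : Integrable f μ) (a x : ℝ) :
    ∫ y in Iic x, f y ∂μ = (∫ y in Iic a, f y ∂μ) + ∫ y in a..x, f y ∂μ := by
  rw [← intervalIntegral.integral_Iic_sub_Iic hf.integrableOn hf.integrableOn, add_sub_cancel]

lemma continuous_setIntegral_Iic {E : Type*} [NormedAddCommGroup E] [NormedSpace ℝ E]
    {μ : Measure ℝ} [NullSingletonClass μ] {f : ℝ → E} (hf : Integrable f μ) :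
    Continuous fun x => ∫ y in Iic x, f y ∂μ := by
  rw [funext fun x => setIntegral_Iic_eq_add_intervalIntegral hf 0 x]
  exact continuous_const.add
    (intervalIntegral.continuous_primitive (fun _ _ => hf.intervalIntegrable) 0)

lemma hasDerivAt_setIntegral_Iic {E : Type*} [NormedAddCommGroup E] [NormedSpace ℝ E]
    [CompleteSpace E] {f : ℝ → E} (hf : Integrable f) (hc : Continuous f) (x : ℝ) :
    HasDerivAt (fun x => ∫ y in Iic x, f y) (f x) x := by
  rw [funext fun x => setIntegral_Iic_eq_add_intervalIntegral hf 0 x]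
  exact (hc.integral_hasStrictDerivAt 0 x).hasDerivAt.const_add _

/-- The moment condition is what makes the primitive of a test function a test function. -/
lemma exists_testFunction_deriv_eq {φ : ℝ → ℝ} (hφ : ContDiff ℝ (⊤ : ℕ∞) φ)
    (hc : HasCompactSupport φ) (h0 : ∫ x, φ x = 0) :
    ∃ Φ : ℝ → ℝ, ContDiff ℝ (⊤ : ℕ∞) Φ ∧ HasCompactSupport Φ ∧ deriv Φ = φ := by
  have hi : Integrable φ := hφ.continuous.integrable_of_hasCompactSupport hc
  have hderiv := hasDerivAt_setIntegral_Iic hi hφ.continuous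
  have hderiv_eq : deriv (fun x => ∫ y in Iic x, φ y) = φ := funext fun x => (hderiv x).deriv
  obtain ⟨R, hR⟩ := hc.isCompact.isBounded.subset_closedBall 0
  have hφ0 {y : ℝ} (hy : R < |y|) : φ y = 0 :=
    image_eq_zero_of_notMem_tsupport fun h => hy.not_ge (by simpa using hR h)
  refine ⟨_,
    contDiff_infty_iff_deriv.mpr ⟨fun x => (hderiv x).differentiableAt, by rwa [hderiv_eq]⟩,
    HasCompactSupport.intro (isCompact_closedBall 0 R) fun x hx => ?_, hderiv_eq⟩
  rw [Metric.mem_closedBall, dist_zero_right, Real.norm_eq_abs, not_le, lt_abs] at hx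
  rcases hx with hx | hx
  · rw [← intervalIntegral.integral_Iic_add_Ioi hi.integrableOn hi.integrableOn (b := x)] at h0
    rw [setIntegral_eq_zero_of_forall_eq_zero (t := Ioi x) fun y hy =>
      hφ0 ((hx.trans hy).trans_le (le_abs_self y)), add_zero] at h0
    exact h0
  · exact setIntegral_eq_zero_of_forall_eq_zero fun y hy =>
      hφ0 (by have := neg_le_abs y; linarith [mem_Iic.mp hy])

end Primitive

namespace HasWeakDeriv

open Set Filter Topology

variable {v v' u u' : ℝ → ℂ}

lemma integrable_testFunction_mul {φ : ℝ → ℝ} (hφ : Continuous φ) (hc : HasCompactSupport φ)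
    (hv : LocallyIntegrable v) : Integrable fun x => (φ x : ℂ) * v x := by
  simpa using hv.integrable_smul_left_of_hasCompactSupport hφ hc

lemma sub (hv : HasWeakDeriv v v') (hu : HasWeakDeriv u u') :
    HasWeakDeriv (v - u) (v' - u') := by
  refine ⟨hv.1.sub hu.1, hv.2.1.sub hu.2.1, fun φ hφ hc => ?_⟩
  have hφ' := hφ.continuous_deriv (by simp)
  simp only [Pi.sub_apply, mul_sub]
  rw [integral_sub (integrable_testFunction_mul hφ' hc.deriv hv.1)
      (integrable_testFunction_mul hφ' hc.deriv hu.1),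
    integral_sub (integrable_testFunction_mul hφ.continuous hc hv.2.1)
      (integrable_testFunction_mul hφ.continuous hc hu.2.1), hv.2.2 φ hφ hc, hu.2.2 φ hφ hc]
  ring

lemma setIntegral_Iic (hv' : Integrable v') :
    HasWeakDeriv (fun x => ∫ y in Iic x, v' y) v' := by
  refine ⟨(continuous_setIntegral_Iic hv').locallyIntegrable, hv'.locallyIntegrable,
    fun φ hφ hc => ?_⟩
  have hderiv : Integrable fun x => ((deriv φ x : ℝ) : ℂ) :=
    ((hφ.continuous_deriv (by simp)).integrable_of_hasCompactSupport hc.deriv).ofReal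
  have htail (y : ℝ) : ∫ x in Ici y, ((deriv φ x : ℝ) : ℂ) = -(φ y : ℂ) := by
    rw [integral_complex_ofReal, integral_Ici_eq_integral_Ioi,
      hc.integral_Ioi_deriv_eq (hφ.of_le (by simp))]
    simp
  rw [integral_mul_setIntegral_Iic hderiv hv']
  simp only [htail, neg_mul, integral_neg]

lemma ae_eq_const (hv : HasWeakDeriv v 0) : ∃ c, v =ᵐ[volume] fun _ => c := by
  obtain ⟨ψ, hψ, hψc, hψ1⟩ : ∃ ψ : ℝ → ℝ, ContDiff ℝ (⊤ : ℕ∞) ψ ∧ HasCompactSupport ψ ∧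
      ∫ x, ψ x = 1 :=
    let β : ContDiffBump (0 : ℝ) := default
    ⟨β.normed volume, β.contDiff_normed, β.hasCompactSupport_normed, β.integral_normed⟩
  refine ⟨∫ x, (ψ x : ℂ) * v x,
    ae_eq_of_integral_contDiff_smul_eq hv.1 (locallyIntegrable_const _) fun φ hφ hc => ?_⟩
  set m := ∫ x, φ x
  have hφi : Integrable φ := hφ.continuous.integrable_of_hasCompactSupport hc
  have hψi : Integrable ψ := hψ.continuous.integrable_of_hasCompactSupport hψc
  obtain ⟨Φ, hΦ, hΦc, hΦ'⟩ := exists_testFunction_deriv_eq (φ := fun x => φ x - m * ψ x)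
    (by fun_prop) (hc.sub hψc.mul_left)
    (by rw [integral_sub hφi (hψi.const_mul m), integral_const_mul, hψ1, mul_one, sub_self])
  have horth := hv.2.2 Φ hΦ hΦc
  have hφv := integrable_testFunction_mul hφ.continuous hc hv.1
  have hψv := integrable_testFunction_mul hψ.continuous hψc hv.1
  simp only [hΦ', Pi.zero_apply, mul_zero, integral_zero, neg_zero, Complex.ofReal_sub,
    Complex.ofReal_mul, sub_mul, mul_assoc] at horth
  rw [integral_sub hφv (hψv.const_mul _), integral_const_mul, sub_eq_zero] at horth
  simp only [Complex.real_smul]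
  rw [horth, integral_mul_const, integral_complex_ofReal]

/-- The primitive of `v'` differs from `v` by a constant, which vanishes because `v` is integrable
and the primitive tends to `0` at `-∞`. -/
lemma ae_eq_setIntegral_Iic (hv : HasWeakDeriv v v') (hvi : Integrable v)
    (hvi' : Integrable v') : v =ᵐ[volume] fun x => ∫ y in Iic x, v' y := by
  obtain ⟨c, hc⟩ : ∃ c, (v - fun x => ∫ y in Iic x, v' y) =ᵐ[volume] fun _ => c :=
    ae_eq_const (by simpa using hv.sub (setIntegral_Iic hvi'))
  have hvc : v =ᵐ[volume] fun x => (∫ y in Iic x, v' y) + c := by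
    filter_upwards [hc] with x hx
    rw [← hx, Pi.sub_apply, add_sub_cancel]
  have hlim : Tendsto (fun x => (∫ y in Iic x, v' y) + c) atBot (𝓝 c) := by
    simpa using (tendsto_integral_Iic_zero tendsto_id).add_const c
  have hc0 : c = 0 := by
    refine ((hvi.congr hvc).integrableAtFilter atBot).eq_zero_of_tendsto (fun s hs => ?_) hlim
    obtain ⟨a, ha⟩ := mem_atBot_sets.mp hs
    exact measure_mono_top (s₁ := Iic a) ha Real.volume_Iic
  simpa [hc0] using hvc

lemma ae_norm_le (hv : HasWeakDeriv v v') (hvi : Integrable v) (hvi' : Integrable v') :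
    ∀ᵐ x, ‖v x‖ ≤ ∫ y, ‖v' y‖ := by
  filter_upwards [hv.ae_eq_setIntegral_Iic hvi hvi'] with x hx
  rw [hx]
  exact (norm_integral_le_integral_norm _).trans
    (setIntegral_le_integral hvi'.norm (.of_forall fun _ => norm_nonneg _))

lemma ae_norm_comp_sub_left_le (hv : HasWeakDeriv v v') (hvi : Integrable v)
    (hvi' : Integrable v') (k : ℝ) : ∀ᵐ x, ‖v (k - x)‖ ≤ ∫ y, ‖v' y‖ :=
  (Measure.measurePreserving_sub_left volume k).quasiMeasurePreserving.ae (hv.ae_norm_le hvi hvi')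

lemma norm_intervalIntegral_mul_le (hv : HasWeakDeriv v v') (hvi : Integrable v)
    (hvi' : Integrable v') {f : ℝ → ℂ} (hf : LocallyIntegrable f) {B : ℝ}
    (hB : ∀ a b, ‖∫ x in a..b, f x‖ ≤ B) (a b : ℝ) :
    ‖∫ x in a..b, f x * v x‖ ≤ B * ∫ x, ‖v' x‖ := by
  wlog hab : a ≤ b generalizing a b
  · rw [intervalIntegral.integral_symm, norm_neg]
    exact this b a (le_of_not_ge hab)
  have htail (y : ℝ) : ‖∫ x in Ici y, f x ∂volume.restrict (Ioc a b)‖ ≤ B := by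
    rw [integral_Ici_eq_integral_Ioi, Measure.restrict_restrict measurableSet_Ioi,
      inter_comm, Ioc_inter_Ioi]
    rcases le_total (max a y) b with h | h
    · rw [← intervalIntegral.integral_of_le h]
      exact hB _ _
    · simpa [Ioc_eq_empty h.not_gt] using hB 0 0
  calc ‖∫ x in a..b, f x * v x‖
      = ‖∫ x in Ioc a b, f x * ∫ y in Iic x, v' y‖ := by
        rw [intervalIntegral.integral_of_le hab]
        congr 1
        refine integral_congr_ae (ae_restrict_of_ae ?_)
        filter_upwards [hv.ae_eq_setIntegral_Iic hvi hvi'] with x hx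
        rw [hx]
    _ = ‖∫ y, (∫ x in Ici y, f x ∂volume.restrict (Ioc a b)) * v' y‖ := by
        rw [integral_mul_setIntegral_Iic (hf.integrableOn_isCompact isCompact_Icc |>.mono_set
          Ioc_subset_Icc_self) hvi']
    _ ≤ ∫ y, B * ‖v' y‖ := by
        refine norm_integral_le_of_norm_le (hvi'.norm.const_mul B) (.of_forall fun y => ?_)
        rw [norm_mul]
        exact mul_le_mul_of_nonneg_right (htail y) (norm_nonneg _)
    _ = B * ∫ x, ‖v' x‖ := integral_const_mul _ _

lemma ofReal_mul (hv : HasWeakDeriv v v') :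
    HasWeakDeriv (fun x => (x : ℂ) * v x) (fun x => v x + (x : ℂ) * v' x) := by
  have hmul {u : ℝ → ℂ} (hu : LocallyIntegrable u) :
      LocallyIntegrable fun x : ℝ => (x : ℂ) * u x :=
    hu.continuous_smul Complex.continuous_ofReal
  refine ⟨hmul hv.1, hv.1.add (hmul hv.2.1), fun φ hφ hc => ?_⟩
  have hφv := integrable_testFunction_mul hφ.continuous hc hv.1
  have hφv' := integrable_testFunction_mul hφ.continuous hc (hmul hv.2.1)
  have hderivv := integrable_testFunction_mul (hφ.continuous_deriv (by simp)) hc.deriv (hmul hv.1)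
  have hderiv (x : ℝ) : deriv (fun x => x * φ x) x = φ x + x * deriv φ x := by
    simpa using deriv_fun_mul (c := fun x => x) differentiableAt_fun_id
      (hφ.differentiable (by simp) x)
  have hleft : ∫ x : ℝ, ((deriv (fun x => x * φ x) x : ℝ) : ℂ) * v x =
      (∫ x : ℝ, (φ x : ℂ) * v x) + ∫ x : ℝ, ((deriv φ x : ℝ) : ℂ) * ((x : ℂ) * v x) := by
    rw [← integral_add hφv hderivv]
    congr 1 with x
    rw [hderiv]
    push_cast
    ring
  have hright : ∫ x : ℝ, ((x * φ x : ℝ) : ℂ) * v' x = ∫ x : ℝ, (φ x : ℂ) * ((x : ℂ) * v' x) := by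
    congr 1 with x
    push_cast
    ring
  have hweak := hv.2.2 (fun x => x * φ x) (by fun_prop) hc.mul_left
  simp only [mul_add]
  rw [integral_add hφv hφv']
  linear_combination hweak - hleft - hright

end HasWeakDeriv

section OscillatoryIntegral

open Filter Topology Convolution

lemma norm_expc (x y : ℝ) : ‖expc x y‖ = exp x := by
  simp [expc, Complex.norm_exp]

lemma expc_eq_exp_smul (x y : ℝ) : expc x y = exp x • expc 0 y := by
  simp [expc, Complex.exp_add]

@[fun_prop]
lemma continuous_expc (x : ℝ) : Continuous (expc x) := by
  unfold expc
  fun_prop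

lemma norm_intervalIntegral_expc_le {c : ℝ} (hc : c ≠ 0) (a b : ℝ) :
    ‖∫ ξ in a..b, expc 0 (c * ξ)‖ ≤ 2 / |c| := by
  have hcI : (c : ℂ) * Complex.I ≠ 0 := by simp [hc]
  have hexp (ξ : ℝ) : expc 0 (c * ξ) = Complex.exp (c * Complex.I * ξ) := by
    simp only [expc, Complex.ofReal_zero, zero_add, Complex.ofReal_mul, mul_right_comm]
  simp only [hexp]
  rw [integral_exp_mul_complex hcI, ← hexp, ← hexp, norm_div, norm_mul, Complex.norm_I, mul_one,
    Complex.norm_real, norm_eq_abs]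
  gcongr
  calc ‖expc 0 (c * b) - expc 0 (c * a)‖ ≤ ‖expc 0 (c * b)‖ + ‖expc 0 (c * a)‖ := norm_sub_le _ _
    _ = 2 := by simp only [norm_expc, exp_zero, one_add_one_eq_two]

lemma norm_integral_le_of_norm_intervalIntegral_le {E : Type*} [NormedAddCommGroup E]
    [NormedSpace ℝ E] {μ : Measure ℝ} {f : ℝ → E} (hf : Integrable f μ) {B : ℝ}
    (hB : ∀ a b, ‖∫ x in a..b, f x ∂μ‖ ≤ B) : ‖∫ x, f x ∂μ‖ ≤ B :=
  le_of_tendsto (intervalIntegral_tendsto_integral hf tendsto_neg_atTop_atBot tendsto_id).norm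
    (.of_forall fun _ => hB _ _)

/-- The convolution of `w` and `g` in which the point `ξ` of `g` carries the phase `e^{icξ}`. At
time `s`, a velocity difference `b` produces it with `c = b * s` and `g ξ = ξ * z ξ`. -/
def oscillatoryConv (c : ℝ) (w g : ℝ → ℂ) (k : ℝ) : ℂ :=
  ∫ ξ, expc 0 (c * ξ) * (w (k - ξ) * g ξ)

variable {w w' g g' : ℝ → ℂ}

lemma integrable_expc_mul (hw : Integrable w) (c : ℝ) :
    Integrable fun ξ => expc 0 (c * ξ) * w ξ :=
  hw.bdd_mul (c := 1) (by fun_prop) (.of_forall fun ξ => by simp [norm_expc])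

lemma norm_oscillatoryConv_le_integral (c : ℝ) (w g : ℝ → ℂ) (k : ℝ) :
    ‖oscillatoryConv c w g k‖ ≤ ∫ ξ, ‖w (k - ξ)‖ * ‖g ξ‖ := by
  refine (norm_integral_le_integral_norm _).trans_eq ?_
  simp only [norm_mul, norm_expc, exp_zero, one_mul]

lemma norm_oscillatoryConv_le_mul_integral_norm (c : ℝ) (hw : HasWeakDeriv w w')
    (hwi : Integrable w) (hwi' : Integrable w') (hg : Integrable g) (k : ℝ) :
    ‖oscillatoryConv c w g k‖ ≤ (∫ ξ, ‖w' ξ‖) * ∫ ξ, ‖g ξ‖ := by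
  rw [← integral_const_mul]
  refine (norm_oscillatoryConv_le_integral c w g k).trans
    (integral_mono_of_nonneg (.of_forall fun ξ => by positivity) (hg.norm.const_mul _) ?_)
  filter_upwards [hw.ae_norm_comp_sub_left_le hwi hwi' k] with ξ hξ
  gcongr

lemma norm_intervalIntegral_expc_mul_sub_le {c : ℝ} (hc : c ≠ 0) (hw : HasWeakDeriv w w')
    (hwi : Integrable w) (hwi' : Integrable w') (k a b : ℝ) :
    ‖∫ ξ in a..b, expc 0 (c * ξ) * w (k - ξ)‖ ≤ 2 / |c| * ∫ ξ, ‖w' ξ‖ := by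
  have hreflect := intervalIntegral.integral_comp_sub_left (a := a) (b := b)
    (fun u => expc 0 (c * (k - u)) * w u) k
  simp only [sub_sub_cancel] at hreflect
  rw [hreflect]
  refine hw.norm_intervalIntegral_mul_le hwi hwi'
    (Continuous.locallyIntegrable (by fun_prop)) (fun a b => ?_) _ _
  rw [intervalIntegral.integral_comp_sub_left (fun u => expc 0 (c * u)) k]
  exact norm_intervalIntegral_expc_le hc _ _

/-- One integration by parts for each factor, but a single gain of `c⁻¹`. -/
lemma norm_oscillatoryConv_le_div {c : ℝ} (hc : c ≠ 0) (hw : HasWeakDeriv w w')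
    (hwi : Integrable w) (hwi' : Integrable w') (hg : HasWeakDeriv g g') (hgi : Integrable g)
    (hgi' : Integrable g') (k : ℝ) :
    ‖oscillatoryConv c w g k‖ ≤ 2 / |c| * (∫ ξ, ‖w' ξ‖) * ∫ ξ, ‖g' ξ‖ := by
  have hreflect : Integrable fun ξ => w (k - ξ) := hwi.comp_sub_left k
  refine norm_integral_le_of_norm_intervalIntegral_le
    (integrable_expc_mul (hgi.bdd_mul hreflect.aestronglyMeasurable
      (hw.ae_norm_comp_sub_left_le hwi hwi' k)) c) fun a b => ?_
  simp only [← mul_assoc]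
  exact hg.norm_intervalIntegral_mul_le hgi hgi' (integrable_expc_mul hreflect c).locallyIntegrable
    (norm_intervalIntegral_expc_mul_sub_le hc hw hwi hwi' k) a b

lemma lintegral_enorm_oscillatoryConv_le (c : ℝ) (hw : Integrable w) (hg : Integrable g) :
    ∫⁻ k, ‖oscillatoryConv c w g k‖ₑ ≤ ENNReal.ofReal ((∫ ξ, ‖w ξ‖) * ∫ ξ, ‖g ξ‖) := by
  set F : ℝ → ℝ := (fun ξ => ‖g ξ‖) ⋆[ContinuousLinearMap.mul ℝ ℝ] fun ξ => ‖w ξ‖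
  have hF : Integrable F := hg.norm.integrable_convolution _ hw.norm
  have hle (k : ℝ) : ‖oscillatoryConv c w g k‖ ≤ F k :=
    (norm_oscillatoryConv_le_integral c w g k).trans_eq <|
      integral_congr_ae (.of_forall fun ξ => mul_comm _ _)
  calc ∫⁻ k, ‖oscillatoryConv c w g k‖ₑ ≤ ∫⁻ k, ENNReal.ofReal (F k) :=
        lintegral_mono fun k => by
          rw [← ofReal_norm]
          exact ENNReal.ofReal_le_ofReal (hle k)
    _ = ENNReal.ofReal (∫ k, F k) :=
        (ofReal_integral_eq_lintegral_ofReal hF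
          (.of_forall fun k => (norm_nonneg _).trans (hle k))).symm
    _ = ENNReal.ofReal ((∫ ξ, ‖w ξ‖) * ∫ ξ, ‖g ξ‖) := by
        rw [integral_convolution _ hg.norm hw.norm, ContinuousLinearMap.mul_apply', mul_comm]

lemma stronglyMeasurable_oscillatoryConv {c : ℝ → ℝ} {w g : ℝ → ℝ → ℂ} (hc : Measurable c)
    (hw : Measurable (Function.uncurry w)) (hg : Measurable (Function.uncurry g)) :
    StronglyMeasurable (Function.uncurry fun s => oscillatoryConv (c s) (w s) (g s)) := by
  refine StronglyMeasurable.integral_prod_right (f := fun (p : ℝ × ℝ) (ξ : ℝ) =>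
    expc 0 (c p.1 * ξ) * (w p.1 (p.2 - ξ) * g p.1 ξ)) (Measurable.stronglyMeasurable ?_)
  have hphase : Measurable fun q : (ℝ × ℝ) × ℝ => expc 0 (c q.1.1 * q.2) :=
    (continuous_expc 0).measurable.comp (by fun_prop)
  have hw' : Measurable fun q : (ℝ × ℝ) × ℝ => w q.1.1 (q.1.2 - q.2) :=
    hw.comp (g := Function.uncurry w) (f := fun q : (ℝ × ℝ) × ℝ => (q.1.1, q.1.2 - q.2))
      (by fun_prop)
  have hg' : Measurable fun q : (ℝ × ℝ) × ℝ => g q.1.1 q.2 :=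
    hg.comp (g := Function.uncurry g) (f := fun q : (ℝ × ℝ) × ℝ => (q.1.1, q.2)) (by fun_prop)
  exact hphase.mul (hw'.mul hg')

end OscillatoryIntegral

section HeatMultiplier

open scoped Nat

lemma rpow_neg_le_of_le_mul {x y c p : ℝ} (hx : 0 < x) (hy : 0 < y) (hyx : y ≤ c * x)
    (hp : 0 ≤ p) : x ^ (-p) ≤ c ^ p * y ^ (-p) := by
  have hc : 0 < c := pos_of_mul_pos_left (hy.trans_le hyx) hx.le
  calc x ^ (-p) ≤ (y / c) ^ (-p) :=
        rpow_le_rpow_of_nonpos (by positivity) (by rwa [div_le_iff₀' hc]) (by linarith)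
    _ = c ^ p * y ^ (-p) := by
        rw [div_rpow hy.le hc.le, rpow_neg hc.le, div_inv_eq_mul, mul_comm]

lemma abs_pow_mul_exp_neg_mul_sq_le {m : ℝ} (hm : 0 < m) (a : ℕ) (k : ℝ) :
    |k| ^ a * exp (-(m * k ^ 2)) ≤ √(a !) * m ^ (-((a : ℝ) / 2)) := by
  have hexp : m ^ a * (|k| ^ a) ^ 2 ≤ a ! * exp (m * k ^ 2) := by
    have h := pow_div_factorial_le_exp (m * k ^ 2) (by positivity) a
    rwa [div_le_iff₀' (by positivity), mul_pow, ← sq_abs, pow_right_comm, sq_abs] at h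
  have hle : |k| ^ a * exp (-(m * k ^ 2)) ≤ √(a ! / m ^ a) := by
    refine le_sqrt_of_sq_le ?_
    rw [le_div_iff₀' (by positivity), mul_pow, ← mul_assoc]
    calc m ^ a * (|k| ^ a) ^ 2 * exp (-(m * k ^ 2)) ^ 2
        ≤ a ! * exp (m * k ^ 2) * exp (-(m * k ^ 2)) ^ 2 := by gcongr
      _ = a ! * exp (-(m * k ^ 2)) := by
          rw [exp_neg]
          field_simp
      _ ≤ a ! := mul_le_of_le_one_right (by positivity) (exp_le_one_iff.mpr (by
          nlinarith [sq_nonneg k]))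
  refine hle.trans_eq ?_
  rw [sqrt_div (by positivity), rpow_neg hm.le, ← rpow_natCast, sqrt_eq_rpow (m ^ _),
    ← rpow_mul hm.le, ← div_eq_mul_inv, mul_one_div]

lemma lintegral_abs_pow_mul_exp_neg_mul_sq {m : ℝ} (hm : 0 < m) (a : ℕ) :
    ∫⁻ k : ℝ, ENNReal.ofReal (|k| ^ a * exp (-(m * k ^ 2))) =
      ENNReal.ofReal (Gamma ((1 + a) / 2) * m ^ (-((1 + (a : ℝ)) / 2))) := by
  have hint : Integrable fun k : ℝ => |k| ^ a * exp (-(m * k ^ 2)) := by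
    simpa [abs_mul] using
      (integrable_rpow_mul_exp_neg_mul_sq hm (neg_one_lt_zero.trans_le a.cast_nonneg)).norm
  have hhalf : ∫ k in Set.Ioi (0 : ℝ), k ^ a * exp (-(m * k ^ 2)) =
      1 / 2 * (Gamma ((1 + a) / 2) * m ^ (-((1 + (a : ℝ)) / 2))) := by
    have h := integral_rpow_mul_exp_neg_mul_rpow two_pos
      (neg_one_lt_zero.trans_le a.cast_nonneg) hm
    simp only [rpow_natCast, rpow_two, neg_mul] at h
    rw [h, neg_div, add_comm (a : ℝ)]
    ring
  have habs := integral_comp_abs (f := fun k : ℝ => k ^ a * exp (-(m * k ^ 2)))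
  simp only [sq_abs] at habs
  rw [← ofReal_integral_eq_lintegral_ofReal hint (.of_forall fun k => by positivity), habs, hhalf]
  ring_nf

end HeatMultiplier

section TimeIntegral

lemma setLIntegral_one_add_rpow_neg_le {α t : ℝ} (hα : 1 < α) (ht : 0 ≤ t) :
    ∫⁻ s in Set.Ioc 0 t, ENNReal.ofReal ((1 + s) ^ (-α)) ≤ ENNReal.ofReal (1 / (α - 1)) := by
  have h0 : (0 : ℝ) ∉ Set.uIcc 1 (1 + t) := Set.notMem_uIcc_of_lt one_pos (by linarith)
  have hint : IntervalIntegrable (fun s : ℝ => (1 + s) ^ (-α)) volume 0 t := by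
    simpa using (intervalIntegral.intervalIntegrable_rpow (.inr h0)).comp_add_left 1
  rw [← ofReal_integral_eq_lintegral_ofReal
      ((intervalIntegrable_iff_integrableOn_Ioc_of_le ht).mp hint)
      (ae_restrict_of_forall_mem measurableSet_Ioc fun s hs => rpow_nonneg (by linarith [hs.1]) _),
    ← intervalIntegral.integral_of_le ht,
    intervalIntegral.integral_comp_add_left (fun x : ℝ => x ^ (-α)) 1, add_zero,
    integral_rpow (.inr ⟨by linarith, h0⟩), one_rpow, ← neg_div_neg_eq, neg_sub, neg_add, neg_neg,
    ← sub_eq_add_neg]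
  have : 0 < α - 1 := sub_pos.mpr hα
  gcongr
  exact sub_le_self _ (by positivity)

lemma setLIntegral_sub_rpow_neg {p t : ℝ} (hp : p < 1) (ht : 0 ≤ t) :
    ∫⁻ s in Set.Ioc 0 t, ENNReal.ofReal ((t - s) ^ (-p)) =
      ENNReal.ofReal (t ^ (1 - p) / (1 - p)) := by
  have hr : -1 < -p := by linarith
  have hint : IntervalIntegrable (fun s : ℝ => (t - s) ^ (-p)) volume 0 t := by
    simpa using (intervalIntegral.intervalIntegrable_rpow' (a := t) (b := 0) hr).comp_sub_left t
  rw [← ofReal_integral_eq_lintegral_ofReal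
      ((intervalIntegrable_iff_integrableOn_Ioc_of_le ht).mp hint)
      (ae_restrict_of_forall_mem measurableSet_Ioc fun s hs => rpow_nonneg (sub_nonneg.mpr hs.2) _),
    ← intervalIntegral.integral_of_le ht,
    intervalIntegral.integral_comp_sub_left (fun x : ℝ => x ^ (-p)) t, integral_rpow (.inl hr),
    sub_self, sub_zero, zero_rpow (by linarith), sub_zero, neg_add_eq_sub]

lemma setLIntegral_one_add_rpow_neg_add_sub_rpow_neg_le {F G α p t : ℝ} (hF : 0 ≤ F) (hG : 0 ≤ G)
    (hα : 1 < α) (hp : p < 1) (ht : 0 ≤ t) :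
    ∫⁻ s in Set.Ioo 0 t, (ENNReal.ofReal F * ENNReal.ofReal ((1 + s) ^ (-α)) +
        ENNReal.ofReal G * ENNReal.ofReal ((t - s) ^ (-p))) ≤
      ENNReal.ofReal (F * (1 / (α - 1)) + G * ((1 + t) ^ (1 - p) / (1 - p))) := by
  have : 0 < α - 1 := sub_pos.mpr hα
  have : 0 < 1 - p := sub_pos.mpr hp
  rw [restrict_Ioo_eq_restrict_Ioc, lintegral_add_left (by fun_prop),
    lintegral_const_mul' _ _ ENNReal.ofReal_ne_top, lintegral_const_mul' _ _ ENNReal.ofReal_ne_top,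
    setLIntegral_sub_rpow_neg hp ht, ENNReal.ofReal_add (by positivity) (by positivity),
    ENNReal.ofReal_mul hF, ENNReal.ofReal_mul hG]
  gcongr
  · exact setLIntegral_one_add_rpow_neg_le hα ht
  · linarith

end TimeIntegral

section Duhamel

open scoped Nat

lemma lintegral_enorm_integral_le_lintegral_lintegral_enorm {X Y E : Type*} [MeasurableSpace X]
    [MeasurableSpace Y] [NormedAddCommGroup E] [NormedSpace ℝ E] {μ : Measure X} {ν : Measure Y}
    [SFinite μ] [SFinite ν] {f : X → Y → E}
    (hf : AEStronglyMeasurable (Function.uncurry f) (μ.prod ν)) :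
    ∫⁻ x, ‖∫ y, f x y ∂ν‖ₑ ∂μ ≤ ∫⁻ y, ∫⁻ x, ‖f x y‖ₑ ∂μ ∂ν :=
  (lintegral_mono fun _ => enorm_integral_le_lintegral_enorm _).trans_eq
    (lintegral_lintegral_swap hf.enorm)

lemma integral_le_of_lintegral_enorm_le {X : Type*} [MeasurableSpace X] {μ : Measure X}
    {f : X → ℝ} {R : ℝ} (hR : 0 ≤ R) (h : ∫⁻ x, ‖f x‖ₑ ∂μ ≤ ENNReal.ofReal R) :
    ∫ x, f x ∂μ ≤ R := by
  refine (le_norm_self _).trans ((ENNReal.ofReal_le_ofReal_iff hR).mp ?_)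
  rw [ofReal_norm]
  exact (enorm_integral_le_lintegral_enorm f).trans h

variable {E : Type*} [NormedAddCommGroup E] [NormedSpace ℝ E]

lemma lintegral_enorm_heat_smul_le_of_norm_le {m S : ℝ} (hm : 0 < m) (a : ℕ) {J : ℝ → E}
    (hJ : ∀ k, ‖J k‖ ≤ S) :
    ∫⁻ k, ‖(|k| ^ a * exp (-(m * k ^ 2))) • J k‖ₑ ≤
      ENNReal.ofReal (Gamma ((1 + a) / 2) * m ^ (-((1 + (a : ℝ)) / 2)) * S) := by
  have : 0 ≤ Gamma ((1 + (a : ℝ)) / 2) := (Gamma_pos_of_pos (by positivity)).le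
  rw [ENNReal.ofReal_mul (by positivity), ← lintegral_abs_pow_mul_exp_neg_mul_sq hm,
    ← lintegral_mul_const' _ _ ENNReal.ofReal_ne_top]
  gcongr with k
  rw [enorm_smul, enorm_of_nonneg (by positivity), ← ofReal_norm (J k)]
  gcongr
  exact hJ k

lemma lintegral_enorm_heat_smul_le_of_lintegral_le {m L : ℝ} (hm : 0 < m) (a : ℕ) {J : ℝ → E}
    (hJ : ∫⁻ k, ‖J k‖ₑ ≤ ENNReal.ofReal L) :
    ∫⁻ k, ‖(|k| ^ a * exp (-(m * k ^ 2))) • J k‖ₑ ≤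
      ENNReal.ofReal (√(a !) * m ^ (-((a : ℝ) / 2)) * L) := by
  calc ∫⁻ k, ‖(|k| ^ a * exp (-(m * k ^ 2))) • J k‖ₑ
      ≤ ∫⁻ k, ENNReal.ofReal (√(a !) * m ^ (-((a : ℝ) / 2))) * ‖J k‖ₑ := by
        gcongr with k
        rw [enorm_smul, enorm_of_nonneg (by positivity)]
        exact mul_le_mul' (ENNReal.ofReal_le_ofReal (abs_pow_mul_exp_neg_mul_sq_le hm a k)) le_rfl
    _ = ENNReal.ofReal (√(a !) * m ^ (-((a : ℝ) / 2))) * ∫⁻ k, ‖J k‖ₑ :=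
        lintegral_const_mul' _ _ ENNReal.ofReal_ne_top
    _ ≤ ENNReal.ofReal (√(a !) * m ^ (-((a : ℝ) / 2)) * L) := by
        rw [ENNReal.ofReal_mul (p := √(a !) * _) (by positivity)]
        gcongr

/-- Far from the endpoint `t` the supremum of `J` is paired with the `L¹` norm of the multiplier,
near it the `L¹` norm of `J` with the supremum of the multiplier. -/
lemma lintegral_enorm_heat_smul_slice_le {d A B α s t : ℝ} (hd : 0 < d) (hA : 0 ≤ A) (hB : 0 ≤ B)
    (hs : 0 ≤ s) (hst : s < t) (a : ℕ) {J : ℝ → E} (hsup : ∀ k, ‖J k‖ ≤ A * (1 + s) ^ (-α))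
    (hL : ∫⁻ k, ‖J k‖ₑ ≤ ENNReal.ofReal (B * (1 + s) ^ (-(3 / 2) : ℝ))) :
    ∫⁻ k, ‖(|k| ^ a * exp (-(d * k ^ 2 * (t - s)))) • J k‖ₑ ≤
      ENNReal.ofReal (A * (Gamma ((1 + a) / 2) * (4 / d) ^ ((1 + (a : ℝ)) / 2)) *
        (1 + t) ^ (-((1 + (a : ℝ)) / 2))) * ENNReal.ofReal ((1 + s) ^ (-α)) +
      ENNReal.ofReal (B * (√(a !) * 2 ^ (3 / 2 : ℝ) * d ^ (-((a : ℝ) / 2))) *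
        (1 + t) ^ (-(3 / 2) : ℝ)) * ENNReal.ofReal ((t - s) ^ (-((a : ℝ) / 2))) := by
  have hτ : 0 < t - s := sub_pos.mpr hst
  have hm : 0 < d * (t - s) := mul_pos hd hτ
  have ht : 0 < 1 + t := by linarith
  have : 0 ≤ Gamma ((1 + (a : ℝ)) / 2) := (Gamma_pos_of_pos (by positivity)).le
  simp only [mul_right_comm d]
  rw [← ENNReal.ofReal_mul (by positivity), ← ENNReal.ofReal_mul (by positivity)]
  have hcase : 1 + t ≤ 4 * (t - s) ∨ 1 + t ≤ 2 * (1 + s) := by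
    by_contra! h
    linarith [h.1, h.2]
  rcases hcase with hfar | hnear
  · refine le_add_right ((lintegral_enorm_heat_smul_le_of_norm_le hm a hsup).trans
      (ENNReal.ofReal_le_ofReal ?_))
    have hdecay : (d * (t - s)) ^ (-((1 + (a : ℝ)) / 2)) ≤
        (4 / d) ^ ((1 + (a : ℝ)) / 2) * (1 + t) ^ (-((1 + (a : ℝ)) / 2)) :=
      rpow_neg_le_of_le_mul hm ht (by field_simp; exact hfar) (by positivity)
    calc _ ≤ Gamma ((1 + a) / 2) * ((4 / d) ^ ((1 + (a : ℝ)) / 2) *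
          (1 + t) ^ (-((1 + (a : ℝ)) / 2))) * (A * (1 + s) ^ (-α)) := by gcongr
      _ = _ := by ring
  · refine le_add_left ((lintegral_enorm_heat_smul_le_of_lintegral_le hm a hL).trans
      (ENNReal.ofReal_le_ofReal ?_))
    have hdecay : (1 + s) ^ (-(3 / 2) : ℝ) ≤ 2 ^ (3 / 2 : ℝ) * (1 + t) ^ (-(3 / 2) : ℝ) :=
      rpow_neg_le_of_le_mul (by positivity) ht hnear (by norm_num)
    rw [mul_rpow hd.le hτ.le]
    calc _ ≤ √(a !) * (d ^ (-((a : ℝ) / 2)) * (t - s) ^ (-((a : ℝ) / 2))) *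
          (B * (2 ^ (3 / 2 : ℝ) * (1 + t) ^ (-(3 / 2) : ℝ))) := by gcongr
      _ = _ := by ring

lemma lintegral_enorm_abs_pow_mul_norm_duhamel_le {t : ℝ} (d : ℝ) (ht : 0 ≤ t) (a : ℕ)
    {J : ℝ → ℝ → E} (hJ : StronglyMeasurable (Function.uncurry J)) :
    ∫⁻ k : ℝ, ‖|k| ^ a * ‖∫ s in (0 : ℝ)..t, exp (-(d * k ^ 2 * (t - s))) • J s k‖‖ₑ ≤
      ∫⁻ s in Set.Ioo 0 t, ∫⁻ k, ‖(|k| ^ a * exp (-(d * k ^ 2 * (t - s)))) • J s k‖ₑ := by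
  have hmult : Measurable fun p : ℝ × ℝ => |p.1| ^ a * exp (-(d * p.1 ^ 2 * (t - p.2))) := by
    fun_prop
  refine le_of_eq_of_le ?_ (lintegral_enorm_integral_le_lintegral_lintegral_enorm
    (hmult.stronglyMeasurable.smul (hJ.comp_measurable measurable_swap)).aestronglyMeasurable)
  congr 1 with k
  simp only [mul_smul, integral_smul, intervalIntegral.integral_of_le ht,
    integral_Ioc_eq_integral_Ioo, enorm_smul, enorm_mul, enorm_norm]

lemma integral_abs_pow_mul_norm_duhamel_le {d A B α t : ℝ} (hd : 0 < d) (hA : 0 ≤ A) (hB : 0 ≤ B)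
    (hα : 1 < α) (ht : 0 ≤ t) {a : ℕ} (ha : a ≤ 1) {J : ℝ → ℝ → E}
    (hJ : StronglyMeasurable (Function.uncurry J))
    (hsup : ∀ s ∈ Set.Ioo 0 t, ∀ k, ‖J s k‖ ≤ A * (1 + s) ^ (-α))
    (hL : ∀ s ∈ Set.Ioo 0 t,
      ∫⁻ k, ‖J s k‖ₑ ≤ ENNReal.ofReal (B * (1 + s) ^ (-(3 / 2) : ℝ))) :
    ∫ k : ℝ, |k| ^ a * ‖∫ s in (0 : ℝ)..t, exp (-(d * k ^ 2 * (t - s))) • J s k‖ ≤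
      (A * (Gamma ((1 + a) / 2) * (4 / d) ^ ((1 + (a : ℝ)) / 2)) / (α - 1) +
        B * (√(a !) * 2 ^ (3 / 2 : ℝ) * d ^ (-((a : ℝ) / 2))) / (1 - a / 2)) *
      (1 + t) ^ (-((1 + (a : ℝ)) / 2)) := by
  set F := A * (Gamma ((1 + a) / 2) * (4 / d) ^ ((1 + (a : ℝ)) / 2))
  set G := B * (√(a !) * 2 ^ (3 / 2 : ℝ) * d ^ (-((a : ℝ) / 2)))
  have : 0 ≤ Gamma ((1 + (a : ℝ)) / 2) := (Gamma_pos_of_pos (by positivity)).le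
  have : 0 ≤ F := by positivity
  have : 0 ≤ G := by positivity
  have ha2 : (a : ℝ) / 2 < 1 := by linarith [show (a : ℝ) ≤ 1 by exact_mod_cast ha]
  have : 0 < 1 - (a : ℝ) / 2 := sub_pos.mpr ha2
  have : 0 < α - 1 := sub_pos.mpr hα
  have hpow : (1 + t) ^ (-(3 / 2) : ℝ) * (1 + t) ^ (1 - (a : ℝ) / 2) =
      (1 + t) ^ (-((1 + (a : ℝ)) / 2)) := by
    rw [← rpow_add (by linarith)]
    ring_nf
  refine integral_le_of_lintegral_enorm_le (by positivity) ?_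
  calc _ ≤ ∫⁻ s in Set.Ioo 0 t, ∫⁻ k, ‖(|k| ^ a * exp (-(d * k ^ 2 * (t - s)))) • J s k‖ₑ :=
        lintegral_enorm_abs_pow_mul_norm_duhamel_le d ht a hJ
    _ ≤ ∫⁻ s in Set.Ioo 0 t,
          (ENNReal.ofReal (F * (1 + t) ^ (-((1 + (a : ℝ)) / 2))) * ENNReal.ofReal ((1 + s) ^ (-α)) +
          ENNReal.ofReal (G * (1 + t) ^ (-(3 / 2) : ℝ)) *
            ENNReal.ofReal ((t - s) ^ (-((a : ℝ) / 2)))) :=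
        setLIntegral_mono' measurableSet_Ioo fun s hs =>
          lintegral_enorm_heat_smul_slice_le hd hA hB hs.1.le hs.2 a (hsup s hs) (hL s hs)
    _ ≤ ENNReal.ofReal (F * (1 + t) ^ (-((1 + (a : ℝ)) / 2)) * (1 / (α - 1)) +
          G * (1 + t) ^ (-(3 / 2) : ℝ) * ((1 + t) ^ (1 - (a : ℝ) / 2) / (1 - a / 2))) :=
        setLIntegral_one_add_rpow_neg_add_sub_rpow_neg_le (by positivity) (by positivity) hα ha2 ht
    _ = _ := by
        congr 1
        linear_combination G / (1 - a / 2) * hpow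

end Duhamel

section MarginalMixedTerm

lemma one_add_log_two_add_le_rpow {s : ℝ} (hs : 0 ≤ s) :
    1 + log (2 + s) ≤ 6 * (1 + s) ^ (1 / 4 : ℝ) := by
  have hroot : (2 : ℝ) ^ (1 / 4 : ℝ) ≤ 5 / 4 := by
    rw [one_div, rpow_inv_le_iff_of_pos zero_le_two (by norm_num) (by norm_num)]
    norm_num
  have hone : 1 ≤ (1 + s) ^ (1 / 4 : ℝ) := one_le_rpow (by linarith) (by norm_num)
  have hlog : log (2 + s) ≤ 5 * (1 + s) ^ (1 / 4 : ℝ) := by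
    calc log (2 + s) ≤ (2 + s) ^ (1 / 4 : ℝ) / (1 / 4) :=
          log_le_rpow_div (by linarith) (by norm_num)
      _ ≤ (2 * (1 + s)) ^ (1 / 4 : ℝ) / (1 / 4) := by
          gcongr
          linarith
      _ = 4 * (2 ^ (1 / 4 : ℝ) * (1 + s) ^ (1 / 4 : ℝ)) := by
          rw [mul_rpow zero_le_two (by linarith)]
          ring
      _ ≤ 4 * (5 / 4 * (1 + s) ^ (1 / 4 : ℝ)) := by gcongr
      _ = 5 * (1 + s) ^ (1 / 4 : ℝ) := by ring
  linarith

lemma min_one_two_div_mul_le_rpow (b : ℝ) {s : ℝ} (hs : 0 < s) :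
    min 1 (2 / |b * s| * ((1 + log (2 + s)) * (1 + s) ^ (-(1 : ℝ) / 2))) ≤
      (4 + 24 / |b|) * (1 + s) ^ (-(5 / 4) : ℝ) := by
  have hs1 : 0 < 1 + s := by linarith
  rcases le_total s 1 with hs' | hs'
  · calc _ ≤ (1 : ℝ) := min_le_left _ _
      _ ≤ 4 * (1 + s) ^ (-2 : ℝ) := by
          rw [rpow_neg hs1.le, rpow_two, ← div_eq_mul_inv, one_le_div (by positivity)]
          nlinarith
      _ ≤ (4 + 24 / |b|) * (1 + s) ^ (-(5 / 4) : ℝ) := by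
          gcongr
          · exact le_add_of_nonneg_right (by positivity)
          · linarith
          · norm_num
  · have hinv : 2 / |b * s| ≤ 4 / |b| * (1 + s)⁻¹ := by
      rw [abs_mul, abs_of_pos hs, ← div_div, div_eq_mul_inv _ s]
      calc 2 / |b| * s⁻¹ ≤ 2 / |b| * (2 * (1 + s)⁻¹) := by
            gcongr
            rw [← div_eq_mul_inv, inv_le_comm₀ hs (by positivity), inv_div]
            linarith
        _ = 4 / |b| * (1 + s)⁻¹ := by ring
    have hpow : (1 + s)⁻¹ * ((1 + s) ^ (1 / 4 : ℝ) * (1 + s) ^ (-(1 : ℝ) / 2)) =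
        (1 + s) ^ (-(5 / 4) : ℝ) := by
      rw [← rpow_neg_one, ← rpow_add hs1, ← rpow_add hs1]
      norm_num
    calc _ ≤ 2 / |b * s| * ((1 + log (2 + s)) * (1 + s) ^ (-(1 : ℝ) / 2)) := min_le_right _ _
      _ ≤ 4 / |b| * (1 + s)⁻¹ * (6 * (1 + s) ^ (1 / 4 : ℝ) * (1 + s) ^ (-(1 : ℝ) / 2)) := by
          have hlog : 0 ≤ log (2 + s) := log_nonneg (by linarith)
          gcongr
          exact one_add_log_two_add_le_rpow hs.le
      _ = 24 / |b| * (1 + s) ^ (-(5 / 4) : ℝ) := by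
          rw [← hpow]
          ring
      _ ≤ (4 + 24 / |b|) * (1 + s) ^ (-(5 / 4) : ℝ) := by
          gcongr
          linarith

lemma integrable_of_integrable_one_add_abs_mul_norm {v : ℝ → ℂ} (hv : LocallyIntegrable v)
    (hi : Integrable fun k => (1 + |k|) * ‖v k‖) : Integrable v := by
  refine hi.mono' hv.aestronglyMeasurable (.of_forall fun k => ?_)
  exact le_mul_of_one_le_left (norm_nonneg _) (le_add_of_nonneg_right (abs_nonneg k))

lemma integrable_ofReal_mul_of_integrable_one_add_abs_mul_norm {v : ℝ → ℂ}
    (hv : LocallyIntegrable v) (hi : Integrable fun k => (1 + |k|) * ‖v k‖) :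
    Integrable fun k : ℝ => (k : ℂ) * v k := by
  refine hi.mono' (Complex.continuous_ofReal.aestronglyMeasurable.mul hv.aestronglyMeasurable)
    (.of_forall fun k => ?_)
  rw [norm_mul, Complex.norm_real, norm_eq_abs]
  gcongr
  exact le_add_of_nonneg_left zero_le_one

lemma integral_expc_mul_eq_exp_smul_oscillatoryConv (x b s : ℝ) (w z : ℝ → ℂ) (k : ℝ) :
    ∫ ξ : ℝ, expc x (b * ξ * s) * (w (k - ξ) * ((ξ : ℂ) * z ξ)) =
      exp x • oscillatoryConv (b * s) w (fun ξ => (ξ : ℂ) * z ξ) k := by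
  simp only [oscillatoryConv, expc_eq_exp_smul x, smul_mul_assoc, integral_smul, mul_right_comm b]

variable {b s η₁ η₂ : ℝ} {w w' z z' : ℝ → ℂ}

lemma norm_oscillatoryConv_ofReal_mul_le_rpow (hb : b ≠ 0) (hs : 0 < s)
    (hw : HasWeakDeriv w w') (hwi : Integrable w) (hwi' : Integrable w') (hz : HasWeakDeriv z z')
    (hzi : Integrable fun k => (1 + |k|) * ‖z k‖) (hzi' : Integrable fun k => (1 + |k|) * ‖z' k‖)
    (hw'η : ∫ k, ‖w' k‖ ≤ η₁) (hzη : ∫ k, ‖z k‖ ≤ η₂ * (1 + s) ^ (-(1 : ℝ) / 2))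
    (hkzη : ∫ k, |k| * ‖z k‖ ≤ η₂)
    (hkz'η : ∫ k, |k| * ‖z' k‖ ≤ η₂ * log (2 + s) * (1 + s) ^ (-(1 : ℝ) / 2)) (k : ℝ) :
    ‖oscillatoryConv (b * s) w (fun ξ => (ξ : ℂ) * z ξ) k‖ ≤
      (4 + 24 / |b|) * (η₁ * η₂) * (1 + s) ^ (-(5 / 4) : ℝ) := by
  have hzi₀ := integrable_of_integrable_one_add_abs_mul_norm hz.1 hzi
  have hkz := integrable_ofReal_mul_of_integrable_one_add_abs_mul_norm hz.1 hzi
  have hkz' := integrable_ofReal_mul_of_integrable_one_add_abs_mul_norm hz.2.1 hzi'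
  have hη₁ : 0 ≤ η₁ := (integral_nonneg fun k => norm_nonneg _).trans hw'η
  have hη₂ : 0 ≤ η₂ := (integral_nonneg fun k => by positivity).trans hkzη
  have hnorm (v : ℝ → ℂ) (ξ : ℝ) : ‖(ξ : ℂ) * v ξ‖ = |ξ| * ‖v ξ‖ := by simp
  have hg : ∫ ξ : ℝ, ‖(ξ : ℂ) * z ξ‖ ≤ η₂ := by simpa only [hnorm] using hkzη
  have hg' : ∫ ξ : ℝ, ‖z ξ + (ξ : ℂ) * z' ξ‖ ≤
      η₂ * ((1 + log (2 + s)) * (1 + s) ^ (-(1 : ℝ) / 2)) := by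
    calc _ ≤ ∫ ξ : ℝ, (‖z ξ‖ + ‖(ξ : ℂ) * z' ξ‖) :=
          integral_mono (hzi₀.add hkz').norm (hzi₀.norm.add hkz'.norm) fun ξ => norm_add_le _ _
      _ = (∫ ξ, ‖z ξ‖) + ∫ ξ, |ξ| * ‖z' ξ‖ := by
          rw [integral_add hzi₀.norm hkz'.norm]
          simp only [hnorm]
      _ ≤ _ := by linarith
  calc _ ≤ min (η₁ * η₂)
        (2 / |b * s| * η₁ * (η₂ * ((1 + log (2 + s)) * (1 + s) ^ (-(1 : ℝ) / 2)))) :=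
        le_min
          ((norm_oscillatoryConv_le_mul_integral_norm _ hw hwi hwi' hkz k).trans (by gcongr))
          ((norm_oscillatoryConv_le_div (mul_ne_zero hb hs.ne') hw hwi hwi' hz.ofReal_mul hkz
            (hzi₀.add hkz') k).trans (by gcongr))
    _ = η₁ * η₂ * min 1 (2 / |b * s| * ((1 + log (2 + s)) * (1 + s) ^ (-(1 : ℝ) / 2))) := by
        rw [mul_min_of_nonneg _ _ (mul_nonneg hη₁ hη₂)]
        ring_nf
    _ ≤ η₁ * η₂ * ((4 + 24 / |b|) * (1 + s) ^ (-(5 / 4) : ℝ)) := by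
        gcongr
        exact min_one_two_div_mul_le_rpow b hs
    _ = _ := by ring

lemma lintegral_enorm_oscillatoryConv_ofReal_mul_le_rpow (c : ℝ) (hs : 0 ≤ s) (hwi : Integrable w)
    (hkz : Integrable fun k : ℝ => (k : ℂ) * z k)
    (hwη : ∫ k, ‖w k‖ ≤ η₁ * (1 + s) ^ (-(1 : ℝ) / 2))
    (hkzη : ∫ k, |k| * ‖z k‖ ≤ η₂ * (1 + s) ^ (-(1 : ℝ))) :
    ∫⁻ k, ‖oscillatoryConv c w (fun ξ => (ξ : ℂ) * z ξ) k‖ₑ ≤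
      ENNReal.ofReal (η₁ * η₂ * (1 + s) ^ (-(3 / 2) : ℝ)) := by
  refine (lintegral_enorm_oscillatoryConv_le c hwi hkz).trans (ENNReal.ofReal_le_ofReal ?_)
  simp only [norm_mul, Complex.norm_real, norm_eq_abs]
  calc _ ≤ η₁ * (1 + s) ^ (-(1 : ℝ) / 2) * (η₂ * (1 + s) ^ (-(1 : ℝ))) :=
        mul_le_mul hwη hkzη (integral_nonneg fun k => by positivity)
          ((integral_nonneg fun k => norm_nonneg _).trans hwη)
    _ = η₁ * η₂ * ((1 + s) ^ (-(1 : ℝ) / 2) * (1 + s) ^ (-(1 : ℝ))) := by ring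
    _ = η₁ * η₂ * (1 + s) ^ (-(3 / 2) : ℝ) := by
        rw [← rpow_add (by linarith)]
        norm_num

end MarginalMixedTerm

open scoped Nat in
theorem marginal_mixed_derivative_term_estimate_general (d b : ℝ) (hd : 0 < d) (hb : b ≠ 0) :
    ∃ C : ℝ, 1 ≤ C ∧
      ∀ t : ℝ, 0 ≤ t → ∀ η₁ η₂ : ℝ, ∀ w w' z z' : ℝ → ℝ → ℂ,
        Measurable (Function.uncurry w) → Measurable (Function.uncurry z) →
        (∀ s ∈ Set.Icc (0 : ℝ) t,
          HasWeakDeriv (w s) (w' s) ∧ HasWeakDeriv (z s) (z' s) ∧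
          Integrable (w s) ∧ Integrable (w' s) ∧
          Integrable (fun k => (1 + |k|) * ‖z s k‖) ∧
          Integrable (fun k => (1 + |k|) * ‖z' s k‖) ∧
          (∫ k : ℝ, ‖w s k‖) ≤ η₁ * (1 + s) ^ (-(1 : ℝ) / 2) ∧
          (∫ k : ℝ, ‖w' s k‖) ≤ η₁ ∧
          (∫ k : ℝ, ‖z s k‖) ≤ η₂ * (1 + s) ^ (-(1 : ℝ) / 2) ∧
          (∫ k : ℝ, |k| * ‖z s k‖) ≤ η₂ * (1 + s) ^ (-(1 : ℝ)) ∧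
          (∫ k : ℝ, |k| * ‖z' s k‖) ≤ η₂ * log (2 + s) * (1 + s) ^ (-(1 : ℝ) / 2)) →
        ∀ a : ℕ, a ≤ 1 →
          (∫ k : ℝ, |k| ^ a *
              ‖∫ s in (0 : ℝ)..t, ∫ ξ : ℝ,
                  expc (-(d * k ^ 2 * (t - s))) (b * ξ * s) *
                    (w s (k - ξ) * (Complex.ofReal ξ * z s ξ))‖) ≤
            C * (η₁ * η₂) * (1 + t) ^ (-(1 + (a : ℝ)) / 2) := by
  set M := 4 + 24 / |b|
  set K : ℕ → ℝ := fun a =>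
    M * (Gamma ((1 + a) / 2) * (4 / d) ^ ((1 + (a : ℝ)) / 2)) / (5 / 4 - 1) +
      √(a !) * 2 ^ (3 / 2 : ℝ) * d ^ (-((a : ℝ) / 2)) / (1 - a / 2)
  refine ⟨max 1 (max (K 0) (K 1)), le_max_left _ _, fun t ht η₁ η₂ w w' z z' hw hz H a ha => ?_⟩
  obtain ⟨hη₁, hη₂⟩ : 0 ≤ η₁ ∧ 0 ≤ η₂ := by
    obtain ⟨-, -, -, -, -, -, -, hw'η, hzη, -⟩ := H 0 ⟨le_rfl, ht⟩
    refine ⟨(integral_nonneg fun k => norm_nonneg _).trans hw'η, ?_⟩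
    simpa using (integral_nonneg fun k => norm_nonneg (z 0 k)).trans hzη
  have hJ : StronglyMeasurable (Function.uncurry fun s =>
      oscillatoryConv (b * s) (w s) fun ξ => (ξ : ℂ) * z s ξ) :=
    stronglyMeasurable_oscillatoryConv (by fun_prop) hw
      ((Complex.measurable_ofReal.comp measurable_snd).mul hz)
  have hKle : K a ≤ max 1 (max (K 0) (K 1)) := by interval_cases a <;> simp
  simp only [integral_expc_mul_eq_exp_smul_oscillatoryConv, neg_div]
  calc _ ≤ _ := integral_abs_pow_mul_norm_duhamel_le (A := M * (η₁ * η₂)) (B := η₁ * η₂)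
        (α := 5 / 4) hd (by positivity) (by positivity) (by norm_num) ht ha hJ ?_ ?_
    _ = K a * (η₁ * η₂) * (1 + t) ^ (-((1 + (a : ℝ)) / 2)) := by
        simp only [K]
        ring
    _ ≤ _ := by gcongr
  · intro s hs
    obtain ⟨dw, dz, iw, iw', iz, iz', -, bw', bz, bkz, bkz'⟩ := H s (Set.Ioo_subset_Icc_self hs)
    have hdecay : (1 + s) ^ (-(1 : ℝ)) ≤ 1 :=
      rpow_le_one_of_one_le_of_nonpos (by linarith [hs.1]) (by norm_num)
    exact norm_oscillatoryConv_ofReal_mul_le_rpow hb hs.1 dw iw iw' dz iz iz' bw' bz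
      (bkz.trans (mul_le_of_le_one_right hη₂ hdecay)) bkz'
  · intro s hs
    obtain ⟨-, dz, iw, -, iz, -, bw, -, -, bkz, -⟩ := H s (Set.Ioo_subset_Icc_self hs)
    exact lintegral_enorm_oscillatoryConv_ofReal_mul_le_rpow _ hs.1.le iw
      (integrable_ofReal_mul_of_integrable_one_add_abs_mul_norm dz.1 iz) bw bkz

/-- Duhamel contribution of a marginal mixed term `u_j ∂ₓ u_l` between two
components whose velocities differ by `b ≠ 0`: for `a ∈ {0,1}`,
`∫ |k|^a |∫_0^t ∫ e^{-dk²(t-s)+ibξs} w(k-ξ,s) ξ z(ξ,s) dξ ds| dk ≤ C η² (1+t)^{-(1+a)/2}`. -/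
theorem marginal_mixed_derivative_term_estimate (d b : ℝ) (hd : 0 < d) (hb : b ≠ 0) :
    ∃ C : ℝ, 1 ≤ C ∧
      ∀ t : ℝ, 0 ≤ t → ∀ η : ℝ, 0 < η → η ≤ 1 →
        ∀ w w' z z' : ℝ → ℝ → ℂ,
          Measurable (Function.uncurry w) → Measurable (Function.uncurry w') →
          Measurable (Function.uncurry z) → Measurable (Function.uncurry z') →
          (∀ s ∈ Set.Icc (0 : ℝ) t,
            HasWeakDeriv (w s) (w' s) ∧ HasWeakDeriv (z s) (z' s) ∧
            Integrable (fun k => (1 + |k|) * ‖w s k‖) ∧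
            Integrable (fun k => (1 + |k|) * ‖w' s k‖) ∧
            Integrable (fun k => (1 + |k|) * ‖z s k‖) ∧
            Integrable (fun k => (1 + |k|) * ‖z' s k‖) ∧
            (∫ k : ℝ, ‖w s k‖) ≤ η * (1 + s) ^ (-(1 : ℝ) / 2) ∧
            (∫ k : ℝ, ‖z s k‖) ≤ η * (1 + s) ^ (-(1 : ℝ) / 2) ∧
            (∫ k : ℝ, |k| * ‖w s k‖) ≤ η * (1 + s) ^ (-(1 : ℝ)) ∧
            (∫ k : ℝ, |k| * ‖z s k‖) ≤ η * (1 + s) ^ (-(1 : ℝ)) ∧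
            (∫ k : ℝ, ‖w' s k‖) ≤ η ∧
            (∫ k : ℝ, ‖z' s k‖) ≤ η ∧
            (∫ k : ℝ, |k| * ‖w' s k‖) ≤ η * Real.log (2 + s) * (1 + s) ^ (-(1 : ℝ) / 2) ∧
            (∫ k : ℝ, |k| * ‖z' s k‖) ≤ η * Real.log (2 + s) * (1 + s) ^ (-(1 : ℝ) / 2)) →
          ∀ a : ℕ, a ≤ 1 →
            (∫ k : ℝ, |k| ^ a *
                ‖∫ s in (0 : ℝ)..t, ∫ ξ : ℝ,
                    expc (-(d * k ^ 2 * (t - s))) (b * ξ * s) *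
                      (w s (k - ξ) * (Complex.ofReal ξ * z s ξ))‖) ≤
              C * η ^ 2 * (1 + t) ^ (-(1 + (a : ℝ)) / 2) := by
  obtain ⟨C, hC, h⟩ := marginal_mixed_derivative_term_estimate_general d b hd hb
  refine ⟨C, hC, fun t ht η _ _ w w' z z' hw _ hz _ H a ha =>
    (h t ht η η w w' z z' hw hz (fun s hs => ?_) a ha).trans_eq (by ring)⟩
  obtain ⟨dw, dz, iw, iw', iz, iz', bw, bz, -, bkz, bw', -, -, bkz'⟩ := H s hs
  exact ⟨dw, dz, integrable_of_integrable_one_add_abs_mul_norm dw.1 iw,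
    integrable_of_integrable_one_add_abs_mul_norm dw.2.1 iw', iz, iz', bw, bw', bz, bkz, bkz'⟩
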